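/- arXiv:2307.15352 — 2 statements merged into one kernel-verified Lean document; each statement's English description precedes it below -/
import Mathlib

section
/- Let n ≥ 1, let a ∈ 𝒮(ℝⁿ) with ‖a‖_{L²(ℝⁿ)} = 1, let κ ∈ 𝒮(ℝⁿ×ℝⁿ), and define the symbol σ(x,ξ) = ∫_{ℝⁿ} κ(x,y) e^{−2πi y·ξ} dy. Then for every f ∈ 𝒮(ℝⁿ) and every w ∈ ℝⁿ, Op^{Wick,a}(σ)f(w) = ∫_{ℝⁿ} f(w−y) κ^{Wick}(w,y) dy, where κ^{Wick}(x,y) = ∫_{ℝⁿ} a(z−y) conj(a(z)) κ(x−z, y) dz. (Lemma A.1: the Wick quantization is a Kohn–Nirenberg operator with the Wick convolution kernel.) -/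
open MeasureTheory Complex

noncomputable section

/-- `e^{2πit}`. -/
def expi (t : ℝ) : ℂ := Complex.exp (2 * (Real.pi : ℂ) * Complex.I * (t : ℂ))

/-- Dot product on `ℝⁿ`. -/
def dotp {n : ℕ} (x y : Fin n → ℝ) : ℝ := ∑ i, x i * y i

/-- Euclidean Fourier transform `𝓕f(ξ) = ∫ f(y) e^{-2πi y·ξ} dy`. -/
def FT {n : ℕ} (f : (Fin n → ℝ) → ℂ) (ξ : Fin n → ℝ) : ℂ :=
  ∫ y, f y * expi (-(dotp y ξ))

/-- Bargmann-type transform `B_a[f](x,ξ) = ∫ f(y) a(y-x) e^{-2πi y·ξ} dy`. -/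
def Barg {n : ℕ} (a f : (Fin n → ℝ) → ℂ) (x ξ : Fin n → ℝ) : ℂ :=
  ∫ y, f y * a (y - x) * expi (-(dotp y ξ))

/-- Wick quantization with window `a`. -/
def WickOp {n : ℕ} (a : (Fin n → ℝ) → ℂ) (σ : (Fin n → ℝ) → (Fin n → ℝ) → ℂ)
    (f : (Fin n → ℝ) → ℂ) (y : Fin n → ℝ) : ℂ :=
  ∫ p : (Fin n → ℝ) × (Fin n → ℝ),
    σ p.1 p.2 * Barg a f p.1 p.2 * (starRingEnd ℂ) (a (y - p.1)) * expi (dotp y p.2)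

/-- Kohn–Nirenberg quantization. -/
def OpKN {n : ℕ} (σ : (Fin n → ℝ) → (Fin n → ℝ) → ℂ) (f : (Fin n → ℝ) → ℂ)
    (x : Fin n → ℝ) : ℂ :=
  ∫ ξ, expi (dotp x ξ) * σ x ξ * FT f ξ

/-- Partial derivative in the `i`-th coordinate direction. -/
def pd {n : ℕ} (i : Fin n) (F : (Fin n → ℝ) → ℂ) : (Fin n → ℝ) → ℂ :=
  fun x => fderiv ℝ F x (Pi.single i 1)

/-- Multi-index derivative `∂^α`. -/
def md {n : ℕ} (α : Fin n → ℕ) (F : (Fin n → ℝ) → ℂ) : (Fin n → ℝ) → ℂ :=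
  (((List.finRange n).map fun i => (pd i)^[α i]).foldr (· ∘ ·) id) F

/-- Mixed derivative `∂_x^β ∂_ξ^α σ`. -/
def mixedD {n : ℕ} (β α : Fin n → ℕ) (σ : (Fin n → ℝ) → (Fin n → ℝ) → ℂ) :
    (Fin n → ℝ) → (Fin n → ℝ) → ℂ :=
  fun x ξ => md β (fun x' => md α (fun ξ' => σ x' ξ') ξ) x

/-- The weight `1 + |ξ|²` (Euclidean norm squared). -/
def wt {n : ℕ} (ξ : Fin n → ℝ) : ℝ := 1 + ∑ i, ξ i ^ 2

/-- Length `|α|` of a multi-index, as a real number. -/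
def mOrd {n : ℕ} (α : Fin n → ℕ) : ℝ := ∑ i, (α i : ℝ)

/-- The Hörmander class `S^m_{ρ,δ}(ℝⁿ)`. -/
def SymbolClass {n : ℕ} (m ρ δ : ℝ) (σ : (Fin n → ℝ) → (Fin n → ℝ) → ℂ) : Prop :=
  (ContDiff ℝ (⊤ : ℕ∞) fun p : (Fin n → ℝ) × (Fin n → ℝ) => σ p.1 p.2) ∧
  ∀ α β : Fin n → ℕ, ∃ C > 0, ∀ x ξ,
    ‖mixedD β α σ x ξ‖ ≤ C * wt ξ ^ ((m - ρ * mOrd α + δ * mOrd β) / 2)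

/-- The seminorm `‖σ‖_{S^m_{ρ,δ},α,β}`. -/
def hSem {n : ℕ} (m ρ δ : ℝ) (α β : Fin n → ℕ)
    (σ : (Fin n → ℝ) → (Fin n → ℝ) → ℂ) : ℝ :=
  ⨆ p : (Fin n → ℝ) × (Fin n → ℝ),
    wt p.2 ^ (-(m - ρ * mOrd α + δ * mOrd β) / 2) * ‖mixedD β α σ p.1 p.2‖

/-- Squared Sobolev norm `‖f‖²_{H^s}`. -/
def sobSq {n : ℕ} (s : ℝ) (f : (Fin n → ℝ) → ℂ) : ℝ :=
  ∫ ξ, wt ξ ^ s * ‖FT f ξ‖ ^ 2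

end

open scoped FourierTransform SchwartzMap ENNReal

/-!
The symbol of `κ` is its Fourier transform in the second variable, and the Bargmann transform at
`x` is the Fourier transform of `f * a (· - x)`. For fixed `x`, Parseval's formula therefore turns
the `ξ`-integral in the Wick quantization at `w` into
`∫ y, κ (x, y) * f (w - y) * a (w - y - x)`, and exchanging the integrals over `x` and `y` followed
by the substitution `x = w - z` gives the kernel.

Both uses of Fubini rest on the decay of `κ` in `x`: every continuous seminorm of the slice
`κ (x, ·)` decays rapidly in `x`. Applied to the seminorm `g ↦ ‖𝓕 g‖_{L¹}`, this makes the symbol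
integrable on phase space, and the remaining factors of the integrand are bounded.
-/

theorem memLp_top_comp_quasiMeasurePreserving {X Y G : Type*} [MeasurableSpace X]
    [MeasurableSpace Y] [NormedAddCommGroup G] {μ : Measure X} {ν : Measure Y} {g : Y → G}
    {φ : X → Y} (hg : MemLp g ∞ ν) (hφ : Measure.QuasiMeasurePreserving φ μ ν) :
    MemLp (fun x => g (φ x)) ∞ μ := by
  refine MemLp.comp_of_map ⟨hg.1.mono_ac hφ.absolutelyContinuous, ?_⟩ hφ.aemeasurable
  exact (eLpNormEssSup_mono_measure g hφ.absolutelyContinuous).trans_lt hg.2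

section Slice

variable {E V F : Type*} [NormedAddCommGroup E] [NormedSpace ℝ E] [NormedAddCommGroup V]
  [NormedSpace ℝ V] [NormedAddCommGroup F] [NormedSpace ℝ F]

theorem norm_iteratedFDeriv_comp_prodMk_le {m : ℕ} {g : E × V → F} (hg : ContDiff ℝ m g)
    (x : E) (y : V) :
    ‖iteratedFDeriv ℝ m (fun y' => g (x, y')) y‖ ≤ ‖iteratedFDeriv ℝ m g (x, y)‖ := by
  have slice_eq : (fun y' => g (x, y')) =
      (fun p => g ((x, 0) + p)) ∘ ContinuousLinearMap.inr ℝ E V := by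
    ext y'; simp
  have translate_contDiff : ContDiff ℝ m fun p => g ((x, 0) + p) := by fun_prop
  rw [slice_eq, ContinuousLinearMap.iteratedFDeriv_comp_right _ translate_contDiff y le_rfl,
    iteratedFDeriv_comp_add_left]
  refine (ContinuousMultilinearMap.norm_compContinuousLinearMap_le _ _).trans ?_
  simp only [ContinuousLinearMap.inr_apply, Prod.mk_add_mk, add_zero, zero_add]
  refine mul_le_of_le_one_right (norm_nonneg _) (Finset.prod_le_one (fun _ _ => norm_nonneg _) ?_)
  exact fun _ _ => ContinuousLinearMap.norm_inr_le_one ℝ E V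

/-- The slice `y ↦ κ (x, y)` of a Schwartz function of two variables, as a Schwartz function. -/
noncomputable def schwartzSlice (κ : 𝓢(E × V, F)) (x : E) : 𝓢(V, F) where
  toFun y := κ (x, y)
  smooth' := (κ.smooth ⊤).comp (by fun_prop)
  decay' k m := by
    obtain ⟨C, -, hC⟩ := κ.decay k m
    refine ⟨C, fun y => le_trans ?_ (hC (x, y))⟩
    gcongr
    · exact norm_snd_le (x, y)
    · exact norm_iteratedFDeriv_comp_prodMk_le (κ.smooth m) x y

theorem exists_one_add_norm_pow_mul_seminorm_schwartzSlice_le (κ : 𝓢(E × V, F)) (N k m : ℕ) :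
    ∃ C, 0 ≤ C ∧ ∀ x, (1 + ‖x‖) ^ N * SchwartzMap.seminorm ℝ k m (schwartzSlice κ x) ≤ C := by
  refine ⟨2 ^ (N + k) * (Finset.Iic (N + k, m)).sup
    (fun i => SchwartzMap.seminorm ℝ i.1 i.2) κ, by positivity, fun x => ?_⟩
  rw [← le_div_iff₀' (by positivity)]
  refine SchwartzMap.seminorm_le_bound ℝ k m _ (by positivity) fun y => ?_
  rw [le_div_iff₀' (by positivity)]
  calc (1 + ‖x‖) ^ N * (‖y‖ ^ k * ‖iteratedFDeriv ℝ m (schwartzSlice κ x) y‖)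
      ≤ (1 + ‖(x, y)‖) ^ N * ((1 + ‖(x, y)‖) ^ k * ‖iteratedFDeriv ℝ m κ (x, y)‖) := by
        gcongr
        · exact norm_fst_le (x, y)
        · exact (norm_snd_le (x, y)).trans (by simp)
        · exact norm_iteratedFDeriv_comp_prodMk_le (κ.smooth m) x y
    _ = (1 + ‖(x, y)‖) ^ (N + k) * ‖iteratedFDeriv ℝ m κ (x, y)‖ := by ring
    _ ≤ _ := SchwartzMap.one_add_le_sup_seminorm_apply (m := (N + k, m)) le_rfl le_rfl κ (x, y)

theorem exists_one_add_norm_pow_mul_apply_schwartzSlice_le {q : Seminorm ℝ 𝓢(V, F)}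
    (hq : Continuous q) (κ : 𝓢(E × V, F)) (N : ℕ) :
    ∃ C, ∀ x, (1 + ‖x‖) ^ N * q (schwartzSlice κ x) ≤ C := by
  obtain ⟨s, C, -, hqC⟩ := Seminorm.bound_of_continuous (schwartz_withSeminorms ℝ V F) q hq
  choose D D_nonneg hD using fun i : ℕ × ℕ =>
    exists_one_add_norm_pow_mul_seminorm_schwartzSlice_le κ N i.1 i.2
  have sum_nonneg : 0 ≤ ∑ i ∈ s, D i := Finset.sum_nonneg fun i _ => D_nonneg i
  refine ⟨C * ∑ i ∈ s, D i, fun x => ?_⟩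
  have sup_le : (s.sup (schwartzSeminormFamily ℝ V F)) (schwartzSlice κ x) ≤
      (∑ i ∈ s, D i) / (1 + ‖x‖) ^ N := by
    refine Seminorm.finset_sup_apply_le (by positivity) fun i hi => ?_
    rw [le_div_iff₀' (by positivity)]
    exact (hD i x).trans (Finset.single_le_sum (fun j _ => D_nonneg j) hi)
  calc (1 + ‖x‖) ^ N * q (schwartzSlice κ x)
      ≤ (1 + ‖x‖) ^ N * (C * ((∑ i ∈ s, D i) / (1 + ‖x‖) ^ N)) := by
        gcongr
        exact (hqC _).trans (mul_le_mul_of_nonneg_left sup_le C.2)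
    _ = C * ∑ i ∈ s, D i := by field_simp

variable [MeasurableSpace E]

theorem exists_integrable_forall_apply_schwartzSlice_le {q : Seminorm ℝ 𝓢(V, F)}
    (hq : Continuous q) (κ : 𝓢(E × V, F)) (μ : Measure E) [μ.HasTemperateGrowth] :
    ∃ φ : E → ℝ, Integrable φ μ ∧ ∀ x, q (schwartzSlice κ x) ≤ φ x := by
  obtain ⟨C, hC⟩ := exists_one_add_norm_pow_mul_apply_schwartzSlice_le hq κ μ.integrablePower
  refine ⟨_, (Measure.integrable_pow_neg_integrablePower μ).const_mul C, fun x => ?_⟩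
  rw [Real.rpow_neg (by positivity), Real.rpow_natCast, ← div_eq_mul_inv,
    le_div_iff₀' (by positivity)]
  exact hC x

section Integrable

variable {μ : Measure E} [μ.HasTemperateGrowth]

theorem integrable_clm_schwartzSlice {W G : Type*} [NormedAddCommGroup W] [NormedSpace ℝ W]
    [MeasurableSpace W] [BorelSpace W] [SecondCountableTopology W] [NormedAddCommGroup G]
    [NormedSpace ℝ G] {ν : Measure W} [ν.HasTemperateGrowth] [SFinite ν]
    (T : 𝓢(V, F) →L[ℝ] 𝓢(W, G)) (κ : 𝓢(E × V, F))
    (hT : AEStronglyMeasurable (fun p : E × W => T (schwartzSlice κ p.1) p.2) (μ.prod ν)) :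
    Integrable (fun p : E × W => T (schwartzSlice κ p.1) p.2) (μ.prod ν) := by
  let L : 𝓢(V, F) →L[ℝ] Lp G 1 ν := SchwartzMap.toLpCLM ℝ G 1 ν ∘L T
  obtain ⟨φ, hφ, hLφ⟩ := exists_integrable_forall_apply_schwartzSlice_le
    (q := (normSeminorm ℝ (Lp G 1 ν)).comp L.toLinearMap) (continuous_norm.comp L.continuous) κ μ
  rw [integrable_prod_iff hT]
  refine ⟨.of_forall fun x => (T (schwartzSlice κ x)).integrable, ?_⟩
  refine hφ.mono' hT.norm.integral_prod_right' (.of_forall fun x => ?_)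
  rw [Real.norm_of_nonneg (integral_nonneg fun _ => norm_nonneg _)]
  exact SchwartzMap.norm_toLp_one.symm.trans_le (hLφ x)

theorem integrable_schwartz_mul_comp_snd {R : Type*} [NormedRing R] [NormedSpace ℝ R]
    [BorelSpace E] [MeasurableSpace V] [BorelSpace V] [SecondCountableTopology E]
    [SecondCountableTopology V]
    (κ : 𝓢(E × V, R)) {ν : Measure V} {f : V → R} (hf : Integrable f ν) :
    Integrable (fun p : E × V => κ p * f p.2) (μ.prod ν) := by
  obtain ⟨φ, hφ, hκφ⟩ := exists_integrable_forall_apply_schwartzSlice_le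
    (schwartz_withSeminorms ℝ V R |>.continuous_seminorm (0, 0)) κ μ
  refine (hφ.mul_prod hf.norm).mono' (κ.continuous.aestronglyMeasurable.mul hf.1.comp_snd)
    (.of_forall fun p => (norm_mul_le _ _).trans ?_)
  gcongr
  exact (SchwartzMap.norm_le_seminorm ℝ (schwartzSlice κ p.1) p.2).trans (hκφ p.1)

end Integrable

end Slice

section Fourier

variable {V F : Type*} [NormedAddCommGroup V] [InnerProductSpace ℝ V] [FiniteDimensional ℝ V]
  [MeasurableSpace V] [BorelSpace V] [NormedAddCommGroup F] [NormedSpace ℂ F]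

theorem fourierInv_comp_sub_left (g : V → F) (w ξ : V) :
    𝓕⁻ (fun y => g (w - y)) ξ = 𝐞 (inner ℝ w ξ) • 𝓕 g ξ := by
  rw [Real.fourierInv_eq, Real.fourier_eq, ← integral_sub_left_eq_self _ _ w, Circle.smul_def,
    ← integral_smul]
  simp only [← Circle.smul_def, sub_sub_cancel, inner_sub_left, sub_eq_add_neg (inner ℝ w ξ),
    AddChar.map_add_eq_mul, mul_smul]

theorem integral_fourier_smul_fourier_eq [CompleteSpace F] (g : 𝓢(V, ℂ)) {h : V → F}
    (hh : Integrable h) (w : V) :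
    ∫ ξ, (𝐞 (inner ℝ w ξ) • 𝓕 (g : V → ℂ) ξ) • 𝓕 h ξ = ∫ y, g y • h (w - y) := by
  let gw : 𝓢(V, ℂ) :=
    SchwartzMap.compCLMOfContinuousLinearEquiv ℂ (.neg ℝ) (g.compSubConstCLM ℂ (-w))
  have hgw : ⇑gw = fun y => g (w - y) := by
    ext y; simp [gw, sub_eq_add_neg, add_comm]
  have fourierInv_gw : ⇑(𝓕⁻ gw : 𝓢(V, ℂ)) = fun ξ => 𝐞 (inner ℝ w ξ) • 𝓕 (g : V → ℂ) ξ := by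
    ext ξ; rw [SchwartzMap.fourierInv_coe, hgw, fourierInv_comp_sub_left]
  have fourier_fourierInv_gw : 𝓕 ((𝓕⁻ gw : 𝓢(V, ℂ)) : V → ℂ) = gw := by
    rw [← SchwartzMap.fourier_coe, FourierTransform.fourier_fourierInv_eq]
  calc ∫ ξ, (𝐞 (inner ℝ w ξ) • 𝓕 (g : V → ℂ) ξ) • 𝓕 h ξ
      = ∫ ξ, (𝓕⁻ gw : 𝓢(V, ℂ)) ξ • 𝓕 h ξ := by rw [fourierInv_gw]
    _ = ∫ y, 𝓕 ((𝓕⁻ gw : 𝓢(V, ℂ)) : V → ℂ) y • h y := by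
        simpa using! (VectorFourier.integral_fourierIntegral_smul_eq_flip (L := innerₗ V)
          Real.continuous_fourierChar continuous_inner (𝓕⁻ gw : 𝓢(V, ℂ)).integrable hh).symm
    _ = ∫ y, g (w - y) • h y := by rw [fourier_fourierInv_gw, hgw]
    _ = ∫ y, g y • h (w - y) := by
        rw [← integral_sub_left_eq_self _ _ w]
        simp only [sub_sub_cancel]

end Fourier

section FT

variable {n : ℕ}

theorem expi_eq_fourierChar (t : ℝ) : expi t = 𝐞 t := by
  rw [Real.fourierChar_apply, expi]
  congr 1
  push_cast
  ring

theorem norm_expi (t : ℝ) : ‖expi t‖ = 1 := by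
  rw [expi_eq_fourierChar, Circle.norm_coe]

theorem continuous_expi : Continuous expi := by
  unfold expi; fun_prop

theorem continuous_dotp :
    Continuous fun p : (Fin n → ℝ) × (Fin n → ℝ) => dotp p.1 p.2 := by
  unfold dotp; fun_prop

theorem inner_toLp (x y : Fin n → ℝ) :
    inner ℝ (WithLp.toLp 2 x : EuclideanSpace ℝ (Fin n)) (WithLp.toLp 2 y) = dotp x y := by
  simp [dotp, PiLp.inner_apply, mul_comm]

theorem integral_toLp {G : Type*} [NormedAddCommGroup G] [NormedSpace ℝ G]
    (φ : EuclideanSpace ℝ (Fin n) → G) : ∫ x : Fin n → ℝ, φ (WithLp.toLp 2 x) = ∫ x, φ x :=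
  (PiLp.volume_preserving_toLp (Fin n)).integral_comp
    (MeasurableEquiv.toLp 2 (Fin n → ℝ)).measurableEmbedding φ

theorem FT_eq_fourier (g : (Fin n → ℝ) → ℂ) (ξ : Fin n → ℝ) :
    FT g ξ = 𝓕 (fun y : EuclideanSpace ℝ (Fin n) => g y.ofLp) (WithLp.toLp 2 ξ) := by
  rw [Real.fourier_eq, ← integral_toLp]
  simp only [inner_toLp, FT, Circle.smul_def, smul_eq_mul, expi_eq_fourierChar, mul_comm]

theorem norm_FT_le (g : (Fin n → ℝ) → ℂ) (ξ : Fin n → ℝ) : ‖FT g ξ‖ ≤ ∫ y, ‖g y‖ := by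
  refine (norm_integral_le_integral_norm _).trans_eq ?_
  simp only [norm_mul, norm_expi, mul_one]

/-- `FT` as a continuous operator on Schwartz functions. -/
noncomputable def schwartzFT (n : ℕ) : 𝓢(Fin n → ℝ, ℂ) →L[ℝ] 𝓢(Fin n → ℝ, ℂ) :=
  (SchwartzMap.compCLMOfContinuousLinearEquiv ℝ (EuclideanSpace.equiv (Fin n) ℝ).symm) ∘L
    FourierTransform.fourierCLM ℝ 𝓢(EuclideanSpace ℝ (Fin n), ℂ) ∘L
    SchwartzMap.compCLMOfContinuousLinearEquiv ℝ (EuclideanSpace.equiv (Fin n) ℝ)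

theorem schwartzFT_apply (g : 𝓢(Fin n → ℝ, ℂ)) (ξ : Fin n → ℝ) : schwartzFT n g ξ = FT g ξ :=
  (FT_eq_fourier g ξ).symm

theorem integral_FT_mul_FT (g : 𝓢(Fin n → ℝ, ℂ)) {h : (Fin n → ℝ) → ℂ} (hh : Integrable h)
    (w : Fin n → ℝ) :
    ∫ ξ, FT g ξ * FT h ξ * expi (dotp w ξ) = ∫ y, g y * h (w - y) := by
  let e := EuclideanSpace.equiv (Fin n) ℝ
  have hh' : Integrable fun y : EuclideanSpace ℝ (Fin n) => h y.ofLp :=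
    (PiLp.volume_preserving_ofLp (Fin n)).integrable_comp_of_integrable hh
  have parseval := integral_fourier_smul_fourier_eq
    (SchwartzMap.compCLMOfContinuousLinearEquiv ℂ e g) hh' (WithLp.toLp 2 w)
  rw [← integral_toLp, ← integral_toLp] at parseval
  refine Eq.trans (integral_congr_ae <| .of_forall fun ξ => ?_) parseval
  simp only [FT_eq_fourier, inner_toLp, expi_eq_fourierChar, Circle.smul_def, smul_eq_mul]
  rw [mul_comm, mul_assoc]
  rfl

theorem aestronglyMeasurable_FT_prodMk {X : Type*} [MeasurableSpace X] {μ : Measure X} [SFinite μ]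
    {G : X × (Fin n → ℝ) → ℂ} (hG : AEStronglyMeasurable G (μ.prod volume)) :
    AEStronglyMeasurable (fun p : X × (Fin n → ℝ) => FT (fun y => G (p.1, y)) p.2)
      (μ.prod volume) := by
  have hG' : AEStronglyMeasurable (fun q : (X × (Fin n → ℝ)) × (Fin n → ℝ) => G (q.1.1, q.2))
      ((μ.prod volume).prod volume) :=
    hG.comp_quasiMeasurePreserving
      (QuasiMeasurePreserving.prodMap Measure.quasiMeasurePreserving_fst (.id volume))
  have hexp : Measurable fun q : (X × (Fin n → ℝ)) × (Fin n → ℝ) => expi (-dotp q.2 q.1.2) :=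
    (continuous_expi.comp continuous_dotp.neg).measurable.comp
      (measurable_snd.prodMk measurable_fst.snd)
  exact (hG'.mul hexp.aestronglyMeasurable).integral_prod_right'

end FT

section Wick

variable {n : ℕ} {a f : (Fin n → ℝ) → ℂ}

/-- The convolution kernel `κ^{Wick}` of the Wick quantization with window `a`, where `κ` is the
kernel of the symbol. -/
noncomputable def wickKernel (a : (Fin n → ℝ) → ℂ) (κ : (Fin n → ℝ) × (Fin n → ℝ) → ℂ)
    (x y : Fin n → ℝ) : ℂ :=
  ∫ z, a (z - y) * (starRingEnd ℂ) (a z) * κ (x - z, y)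

theorem integrable_mul_comp_sub_right (ha : MemLp a ∞) (hf : Integrable f) (x : Fin n → ℝ) :
    Integrable fun y => f y * a (y - x) :=
  hf.mul_of_top_left (ha.comp_measurePreserving (measurePreserving_sub_right volume x))

theorem aestronglyMeasurable_Barg (ha : AEStronglyMeasurable a) (hf : AEStronglyMeasurable f) :
    AEStronglyMeasurable fun p : (Fin n → ℝ) × (Fin n → ℝ) => Barg a f p.1 p.2 := by
  refine aestronglyMeasurable_FT_prodMk (μ := volume) (G := fun q => f q.2 * a (q.2 - q.1)) ?_
  refine hf.comp_snd.mul (ha.comp_quasiMeasurePreserving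
      (QuasiMeasurePreserving.prod_of_right (by fun_prop) ?_))
  exact .of_forall fun x => (measurePreserving_sub_right volume x).quasiMeasurePreserving

theorem memLp_top_Barg (ha : MemLp a ∞) (hf : Integrable f) :
    MemLp (fun p : (Fin n → ℝ) × (Fin n → ℝ) => Barg a f p.1 p.2) ∞ := by
  obtain ⟨M, hM⟩ := eLpNormEssSup_lt_top_iff_isBoundedUnder.mp ha.2
  refine memLp_top_of_bound (aestronglyMeasurable_Barg ha.1 hf.1) (∫ y, ‖f y‖ * M)
    (.of_forall fun p => (norm_FT_le _ _).trans ?_)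
  refine integral_mono_ae (integrable_mul_comp_sub_right ha hf p.1).norm (hf.norm.mul_const _) ?_
  filter_upwards [(measurePreserving_sub_right volume p.1).quasiMeasurePreserving.ae hM]
    with y hy
  rw [norm_mul]
  gcongr
  exact hy

theorem integrable_FT_schwartzSlice (κ : 𝓢((Fin n → ℝ) × (Fin n → ℝ), ℂ)) :
    Integrable fun p : (Fin n → ℝ) × (Fin n → ℝ) => FT (schwartzSlice κ p.1) p.2 := by
  simp only [← schwartzFT_apply]
  refine integrable_clm_schwartzSlice (schwartzFT n) κ ?_
  simp only [schwartzFT_apply]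
  exact aestronglyMeasurable_FT_prodMk κ.continuous.aestronglyMeasurable

theorem memLp_top_conj_comp_sub_fst (ha : MemLp a ∞) (w : Fin n → ℝ) :
    MemLp (fun p : (Fin n → ℝ) × (Fin n → ℝ) => (starRingEnd ℂ) (a (w - p.1))) ∞ :=
  memLp_top_comp_quasiMeasurePreserving (g := star a)
    (φ := fun p : (Fin n → ℝ) × (Fin n → ℝ) => w - p.1) ha.star
    ((quasiMeasurePreserving_sub_left volume w).comp Measure.quasiMeasurePreserving_fst)

theorem integrable_wickOp_integrand (ha : MemLp a ∞) (κ : 𝓢((Fin n → ℝ) × (Fin n → ℝ), ℂ))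
    (hf : Integrable f) (w : Fin n → ℝ) :
    Integrable fun p : (Fin n → ℝ) × (Fin n → ℝ) => FT (schwartzSlice κ p.1) p.2 *
      Barg a f p.1 p.2 * (starRingEnd ℂ) (a (w - p.1)) * expi (dotp w p.2) := by
  have expi_memLp : MemLp (fun p : (Fin n → ℝ) × (Fin n → ℝ) => expi (dotp w p.2)) ∞ :=
    memLp_top_of_bound (continuous_expi.comp <| continuous_dotp.comp <|
      continuous_const.prodMk continuous_snd).aestronglyMeasurable 1
      (.of_forall fun _ => (norm_expi _).le)
  exact (((integrable_FT_schwartzSlice κ).mul_of_top_left (memLp_top_Barg ha hf)).mul_of_top_left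
    (memLp_top_conj_comp_sub_fst ha w)).mul_of_top_left expi_memLp

theorem integrable_kernel_integrand (ha : MemLp a ∞) (κ : 𝓢((Fin n → ℝ) × (Fin n → ℝ), ℂ))
    (hf : Integrable f) (w : Fin n → ℝ) :
    Integrable fun p : (Fin n → ℝ) × (Fin n → ℝ) =>
      κ p * f (w - p.2) * a (w - p.2 - p.1) * (starRingEnd ℂ) (a (w - p.1)) := by
  have translate_memLp : MemLp (fun p : (Fin n → ℝ) × (Fin n → ℝ) => a (w - p.2 - p.1)) ∞ := by
    refine memLp_top_comp_quasiMeasurePreserving ha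
      (QuasiMeasurePreserving.prod_of_right (by fun_prop) ?_)
    exact .of_forall fun x => (measurePreserving_sub_right volume x).quasiMeasurePreserving.comp
      (quasiMeasurePreserving_sub_left volume w)
  exact ((integrable_schwartz_mul_comp_snd κ (hf.comp_sub_left w)).mul_of_top_left
    translate_memLp).mul_of_top_left (memLp_top_conj_comp_sub_fst ha w)

theorem integral_wickOp_integrand (ha : MemLp a ∞) (κ : 𝓢((Fin n → ℝ) × (Fin n → ℝ), ℂ))
    (hf : Integrable f) (w x : Fin n → ℝ) :
    ∫ ξ, FT (schwartzSlice κ x) ξ * Barg a f x ξ * (starRingEnd ℂ) (a (w - x)) * expi (dotp w ξ) =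
      ∫ y, κ (x, y) * f (w - y) * a (w - y - x) * (starRingEnd ℂ) (a (w - x)) := by
  have parseval := integral_FT_mul_FT (schwartzSlice κ x) (integrable_mul_comp_sub_right ha hf x) w
  simp only [mul_right_comm _ ((starRingEnd ℂ) _), integral_mul_const]
  simpa only [mul_assoc] using! congrArg (· * (starRingEnd ℂ) (a (w - x))) parseval

theorem integral_kernel_integrand (a : (Fin n → ℝ) → ℂ) (κ : (Fin n → ℝ) × (Fin n → ℝ) → ℂ)
    (f : (Fin n → ℝ) → ℂ) (w y : Fin n → ℝ) :
    ∫ x, κ (x, y) * f (w - y) * a (w - y - x) * (starRingEnd ℂ) (a (w - x)) =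
      f (w - y) * wickKernel a κ w y := by
  rw [wickKernel, ← integral_const_mul, ← integral_sub_left_eq_self _ _ w]
  refine integral_congr_ae (.of_forall fun z => ?_)
  simp only [sub_sub_cancel, sub_right_comm w y]
  ring

end Wick

theorem wick_kernel_general {n : ℕ} {a : (Fin n → ℝ) → ℂ} (ha : MemLp a ∞)
    (κ : 𝓢((Fin n → ℝ) × (Fin n → ℝ), ℂ)) {σ : (Fin n → ℝ) → (Fin n → ℝ) → ℂ}
    (hσ : ∀ x ξ, σ x ξ = ∫ y, κ (x, y) * expi (-(dotp y ξ)))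
    {f : (Fin n → ℝ) → ℂ} (hf : Integrable f) (w : Fin n → ℝ) :
    WickOp a σ f w = ∫ y, f (w - y) * wickKernel a κ w y := by
  obtain rfl : σ = fun x => FT (schwartzSlice κ x) := funext₂ hσ
  calc WickOp a (fun x => FT (schwartzSlice κ x)) f w
      = ∫ x, ∫ ξ, FT (schwartzSlice κ x) ξ * Barg a f x ξ * (starRingEnd ℂ) (a (w - x)) *
          expi (dotp w ξ) := integral_prod _ (integrable_wickOp_integrand ha κ hf w)
    _ = ∫ x, ∫ y, κ (x, y) * f (w - y) * a (w - y - x) * (starRingEnd ℂ) (a (w - x)) := by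
        simp only [integral_wickOp_integrand ha κ hf w]
    _ = ∫ y, ∫ x, κ (x, y) * f (w - y) * a (w - y - x) * (starRingEnd ℂ) (a (w - x)) :=
        integral_integral_swap (integrable_kernel_integrand ha κ hf w)
    _ = ∫ y, f (w - y) * wickKernel a κ w y := by
        simp only [integral_kernel_integrand]

/-- the Wick quantization is a Kohn–Nirenberg operator with
the Wick convolution kernel. -/
theorem wick_kernel (n : ℕ) (hn : 1 ≤ n)
    (a : SchwartzMap (Fin n → ℝ) ℂ) (ha : (∫ y, ‖a y‖ ^ 2) = 1)
    (κ : SchwartzMap ((Fin n → ℝ) × (Fin n → ℝ)) ℂ)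
    (σ : (Fin n → ℝ) → (Fin n → ℝ) → ℂ)
    (hσ : ∀ x ξ, σ x ξ = ∫ y, κ (x, y) * expi (-(dotp y ξ)))
    (f : SchwartzMap (Fin n → ℝ) ℂ) (w : Fin n → ℝ) :
    WickOp (⇑a) σ (⇑f) w
      = ∫ y, f (w - y) * (∫ z, a (z - y) * (starRingEnd ℂ) (a z) * κ (w - z, y)) :=
  wick_kernel_general a.memLp_top κ hσ f.integrable w
end

section
/- Let n ≥ 1, m ∈ ℝ, 1 ≥ ρ ≥ δ ≥ 0, and fix multi-indices α, β. There is a constant C > 0 depending only on n and β such that for every σ ∈ S^m_{ρ,δ}(ℝⁿ) and every φ ∈ 𝒮(ℝⁿ) with ∫_{ℝⁿ} φ(y) dy = 1, one has for all (x,ξ): (1+|ξ|²)^{−(m+δ−ρ|α|+δ|β|)/2} |∂_x^β ∂_ξ^α (σ∗φ − σ)(x,ξ)| ≤ C (∫_{ℝⁿ} |y| |φ(y)| dy) · max_{|β'| = |β|+1} ‖σ‖_{S^m_{ρ,δ},α,β'}, where (σ∗φ)(x,ξ) = ∫_{ℝⁿ} φ(z) σ(x−z, ξ) dz. In particular σ∗φ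 − σ ∈ S^{m+δ}_{ρ,δ}(ℝⁿ). (Euclidean analogue of Lemma 3.4(2).) -/
open MeasureTheory Complex

/-!
All derivatives of a symbol are bounded as long as `ξ` stays bounded, so one may differentiate
under the integral sign: `∂_x^β ∂_ξ^α (φ ∗ σ - σ) = φ ∗ h - h` with `h = ∂_x^β ∂_ξ^α σ`.
Since `∫ φ = 1`, `(φ ∗ h - h)(x, ξ) = ∫ φ(z) (h(x - z, ξ) - h(x, ξ)) dz`, which the mean value
inequality bounds by `∫ |z| |φ(z)| dz` times the supremum of `|∇_x h(·, ξ)|`. The `n` components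
of `∇_x h` are the derivatives `∂_x^(β + e_i) ∂_ξ^α σ`; the additional `x`-derivative costs the
factor `(1 + |ξ|²)^(δ/2)`, whence the order `m + δ`.
-/

open scoped ContDiff

section MultiIterate

variable {ι κ X Y : Type*}

/-- The composite `A i₁ ^ β i₁ ∘ A i₂ ^ β i₂ ∘ ⋯` over a list `l = [i₁, i₂, …]`. It is the shape of
the multi-index derivative `md`, freed from the choice of operators. -/
def multiIterate (A : ι → X → X) (l : List ι) (β : ι → ℕ) : X → X :=
  (l.map fun i => (A i)^[β i]).foldr (· ∘ ·) id

theorem multiIterate_cons (A : ι → X → X) (i : ι) (l : List ι) (β : ι → ℕ) (x : X) :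
    multiIterate A (i :: l) β x = (A i)^[β i] (multiIterate A l β x) :=
  rfl

theorem multiIterate_zero (A : ι → X → X) (l : List ι) (x : X) : multiIterate A l 0 x = x := by
  induction l with
  | nil => rfl
  | cons i l ih => rw [multiIterate_cons, ih, Pi.zero_apply, Function.iterate_zero, id]

theorem multiIterate_append (A : ι → X → X) (l l' : List ι) (β : ι → ℕ) (x : X) :
    multiIterate A (l ++ l') β x = multiIterate A l β (multiIterate A l' β x) := by
  induction l with
  | nil => rfl
  | cons i l ih => rw [List.cons_append, multiIterate_cons, multiIterate_cons, ih]

theorem multiIterate_map (A : ι → X → X) (e : κ → ι) (l : List κ) (β : ι → ℕ) (x : X) :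
    multiIterate A (l.map e) β x = multiIterate (fun k => A (e k)) l (β ∘ e) x := by
  simp only [multiIterate, List.map_map, Function.comp_def]

theorem multiIterate_congr {A : ι → X → X} {l : List ι} {β γ : ι → ℕ} (h : ∀ i ∈ l, β i = γ i) :
    multiIterate A l β = multiIterate A l γ := by
  unfold multiIterate
  rw [List.map_congr_left fun i hi => by rw [h i hi]]

variable {A : ι → X → X} {B : ι → Y → Y} {P : X → Prop} {S : X → Y}

theorem multiIterate_induction (hA : ∀ i x, P x → P (A i x)) (l : List ι) (β : ι → ℕ) {x : X}
    (hx : P x) : P (multiIterate A l β x) := by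
  induction l with
  | nil => exact hx
  | cons i l ih => exact Set.MapsTo.iterate (s := {x | P x}) (hA i) (β i) ih

theorem map_iterate_of_semiconj {A : X → X} {B : Y → Y} (hA : ∀ x, P x → P (A x))
    (hS : ∀ x, P x → S (A x) = B (S x)) (k : ℕ) {x : X} (hx : P x) :
    S (A^[k] x) = B^[k] (S x) := by
  induction k generalizing x with
  | zero => rfl
  | succ k ih => rw [Function.iterate_succ_apply, ih (hA x hx), hS x hx,
      Function.iterate_succ_apply]

theorem map_multiIterate_of_semiconj (hA : ∀ i x, P x → P (A i x))
    (hS : ∀ i x, P x → S (A i x) = B i (S x)) (l : List ι) (β : ι → ℕ) {x : X} (hx : P x) :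
    S (multiIterate A l β x) = multiIterate B l β (S x) := by
  induction l with
  | nil => rfl
  | cons i l ih =>
    rw [multiIterate_cons, multiIterate_cons, ← ih]
    exact map_iterate_of_semiconj (hA i) (hS i) (β i) (multiIterate_induction hA l β hx)

theorem multiIterate_add_single [DecidableEq ι] (hA : ∀ i x, P x → P (A i x))
    (hcomm : ∀ i j x, P x → A i (A j x) = A j (A i x)) {l : List ι} (hl : l.Nodup) {i : ι}
    (hi : i ∈ l) (β : ι → ℕ) {x : X} (hx : P x) :
    multiIterate A l (β + Pi.single i 1) x = multiIterate A l β (A i x) := by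
  induction l with
  | nil => exact absurd hi List.not_mem_nil
  | cons j l ih =>
    obtain ⟨hjl, hl⟩ := List.nodup_cons.1 hl
    rw [multiIterate_cons, multiIterate_cons]
    rcases List.mem_cons.1 hi with rfl | hil
    · have hβ : ∀ k ∈ l, (β + Pi.single i 1 : ι → ℕ) k = β k := fun k hk => by
        simp [ne_of_mem_of_not_mem hk hjl]
      rw [multiIterate_congr hβ, ← map_multiIterate_of_semiconj hA (hcomm i) l β hx]
      simp
    · rw [ih hl hil]
      simp [(ne_of_mem_of_not_mem hil hjl).symm]

end MultiIterate

section DirDeriv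

variable {V W G : Type*} [NormedAddCommGroup V] [NormedSpace ℝ V] [NormedAddCommGroup W]
  [NormedSpace ℝ W] [NormedAddCommGroup G] [NormedSpace ℝ G]

/-- The directional derivative `∂_v f` as an operator on functions; for `v` a coordinate vector of
`ℝⁿ` it is `pd`. As for `fderiv`, its value is `0` where `f` is not differentiable. -/
noncomputable def dirDeriv (v : V) (f : V → G) : V → G :=
  fun p => fderiv ℝ f p v

theorem contDiff_dirDeriv (v : V) {f : V → G} (hf : ContDiff ℝ ∞ f) :
    ContDiff ℝ ∞ (dirDeriv v f) :=
  (hf.fderiv_right (m := ∞) le_rfl).clm_apply contDiff_const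

theorem norm_iteratedFDeriv_dirDeriv_le {f : V → G} (hf : ContDiff ℝ ∞ f) (v : V) (k : ℕ) (p : V) :
    ‖iteratedFDeriv ℝ k (dirDeriv v f) p‖ ≤ ‖v‖ * ‖iteratedFDeriv ℝ (k + 1) f p‖ := by
  rw [← norm_iteratedFDeriv_fderiv]
  exact norm_iteratedFDeriv_clm_apply_const (hf.fderiv_right (m := ∞) le_rfl).contDiffAt
    (mod_cast le_top)

theorem dirDeriv_dirDeriv_apply {f : V → G} (hf : ContDiff ℝ 2 f) (v w p : V) :
    dirDeriv v (dirDeriv w f) p = fderiv ℝ (fderiv ℝ f) p v w := by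
  have hf' : DifferentiableAt ℝ (fderiv ℝ f) p :=
    (hf.fderiv_right (m := 1) le_rfl).differentiable one_ne_zero p
  have h : HasFDerivAt (dirDeriv w f) _ p :=
    hf'.hasFDerivAt.clm_apply (hasFDerivAt_const w p)
  simp [dirDeriv, h.fderiv]

theorem dirDeriv_comm {f : V → G} (hf : ContDiff ℝ 2 f) (v w : V) :
    dirDeriv v (dirDeriv w f) = dirDeriv w (dirDeriv v f) := by
  funext p
  rw [dirDeriv_dirDeriv_apply hf, dirDeriv_dirDeriv_apply hf]
  exact (hf.contDiffAt.isSymmSndFDerivAt (by simp)).eq v w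

theorem dirDeriv_slice_fst {f : V × W → G} (hf : Differentiable ℝ f) (v : V) (y : W) :
    dirDeriv v (fun x => f (x, y)) = fun x => dirDeriv (v, 0) f (x, y) := by
  funext x
  have h : HasFDerivAt (fun x => f (x, y)) (fderiv ℝ f (x, y) ∘SL .inl ℝ V W) x :=
    (hf (x, y)).hasFDerivAt.comp x (hasFDerivAt_prodMk_left x y)
  simp [dirDeriv, h.fderiv]

theorem dirDeriv_slice_snd {f : V × W → G} (hf : Differentiable ℝ f) (w : W) (x : V) :
    dirDeriv w (fun y => f (x, y)) = fun y => dirDeriv (0, w) f (x, y) := by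
  funext y
  have h : HasFDerivAt (fun y => f (x, y)) (fderiv ℝ f (x, y) ∘SL .inr ℝ V W) y :=
    (hf (x, y)).hasFDerivAt.comp y (hasFDerivAt_prodMk_right x y)
  simp [dirDeriv, h.fderiv]

theorem fderiv_comp_sub_fst (f : V × W → G) (z : V) (p : V × W) :
    fderiv ℝ (fun q : V × W => f (q.1 - z, q.2)) p = fderiv ℝ f (p.1 - z, p.2) := by
  have hsub (q : V × W) : (q.1 - z, q.2) = q - (z, 0) := by ext <;> simp
  simp only [hsub, fderiv_comp_sub]

theorem fderiv_eq_sum_dirDeriv_basis {ι : Type*} [Fintype ι] [FiniteDimensional ℝ V]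
    (b : Module.Basis ι ℝ V) (f : V → G) :
    fderiv ℝ f = fun p => ∑ i, ContinuousLinearMap.smulRightL ℝ V G
      (b.coord i).toContinuousLinearMap (dirDeriv (b i) f p) := by
  funext p
  ext v
  conv_lhs => rw [← b.sum_repr v, map_sum]
  simp [dirDeriv]

theorem norm_iteratedFDeriv_succ_le_sum_dirDeriv_basis {ι : Type*} [Fintype ι]
    [FiniteDimensional ℝ V] (b : Module.Basis ι ℝ V) {f : V → G} (hf : ContDiff ℝ ∞ f) (k : ℕ)
    (p : V) :
    ‖iteratedFDeriv ℝ (k + 1) f p‖ ≤ ∑ i, ‖ContinuousLinearMap.smulRightL ℝ V G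
      (b.coord i).toContinuousLinearMap‖ * ‖iteratedFDeriv ℝ k (dirDeriv (b i) f) p‖ := by
  have hsmooth (i : ι) : ContDiffAt ℝ k (dirDeriv (b i) f) p :=
    ((contDiff_dirDeriv (b i) hf).of_le (mod_cast le_top)).contDiffAt
  rw [← norm_iteratedFDeriv_fderiv, fderiv_eq_sum_dirDeriv_basis b f,
    iteratedFDeriv_fun_sum_apply fun i _ =>
      (ContinuousLinearMap.contDiff _).contDiffAt.fun_comp p (hsmooth i)]
  exact (norm_sum_le _ _).trans <| Finset.sum_le_sum fun i _ =>
    ContinuousLinearMap.norm_iteratedFDeriv_comp_left _ (hsmooth i) le_rfl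

theorem norm_le_sum_norm_apply_single {ι : Type*} [Fintype ι] [DecidableEq ι]
    (L : (ι → ℝ) →L[ℝ] G) : ‖L‖ ≤ ∑ i, ‖L (Pi.single i 1)‖ := by
  refine L.opNorm_le_bound (by positivity) fun v => ?_
  calc ‖L v‖ = ‖∑ i, v i • L (Pi.single i 1)‖ := by
        conv_lhs => rw [pi_eq_sum_univ' v, map_sum]
        simp only [map_smul]
    _ ≤ ∑ i, ‖v i‖ * ‖L (Pi.single i 1)‖ := by
        simpa only [norm_smul] using norm_sum_le Finset.univ fun i => v i • L (Pi.single i 1)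
    _ ≤ ∑ i, ‖v‖ * ‖L (Pi.single i 1)‖ := by gcongr; exact norm_le_pi_norm v _
    _ = (∑ i, ‖L (Pi.single i 1)‖) * ‖v‖ := by rw [← Finset.mul_sum, mul_comm]

end DirDeriv

section BoundedOnStrips

variable {E F G : Type*}

/-- `f` is bounded on `E × K` for every bounded set `K ⊆ F`. -/
def BoundedOnStrips [Norm F] [Norm G] (f : E × F → G) : Prop :=
  ∀ R : ℝ, ∃ C : ℝ, ∀ p : E × F, ‖p.2‖ ≤ R → ‖f p‖ ≤ C

theorem BoundedOnStrips.of_norm_le_sum {ι G' : Type*} [Fintype ι] [Norm F] [Norm G]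
    [Norm G'] {f : E × F → G} {g : ι → E × F → G'} {c : ι → ℝ} (hg : ∀ i, BoundedOnStrips (g i))
    (hc : ∀ i, 0 ≤ c i) (hfg : ∀ p, ‖f p‖ ≤ ∑ i, c i * ‖g i p‖) : BoundedOnStrips f := by
  intro R
  choose C hC using fun i => hg i R
  exact ⟨∑ i, c i * C i, fun p hp => (hfg p).trans <|
    Finset.sum_le_sum fun i _ => mul_le_mul_of_nonneg_left (hC i p hp) (hc i)⟩

variable [NormedAddCommGroup E] [NormedSpace ℝ E] [NormedAddCommGroup F] [NormedSpace ℝ F]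
  [NormedAddCommGroup G] [NormedSpace ℝ G]

/-- Smooth functions on `E × F` all of whose derivatives are bounded on `E × K` for bounded
`K ⊆ F`: the functions that may be convolved in the first variable with any integrable function
and differentiated under the integral sign. -/
structure SmoothBoundedOnStrips (f : E × F → G) : Prop where
  contDiff : ContDiff ℝ ∞ f
  boundedOnStrips_iteratedFDeriv : ∀ k, BoundedOnStrips (iteratedFDeriv ℝ k f)

namespace SmoothBoundedOnStrips

variable {f : E × F → G}

theorem boundedOnStrips (hf : SmoothBoundedOnStrips f) : BoundedOnStrips f := by
  simpa only [BoundedOnStrips, norm_iteratedFDeriv_zero] using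
    hf.boundedOnStrips_iteratedFDeriv 0

theorem boundedOnStrips_fderiv (hf : SmoothBoundedOnStrips f) :
    BoundedOnStrips (fderiv ℝ f) := by
  simpa only [BoundedOnStrips, norm_iteratedFDeriv_one] using
    hf.boundedOnStrips_iteratedFDeriv 1

protected theorem dirDeriv (hf : SmoothBoundedOnStrips f) (v : E × F) :
    SmoothBoundedOnStrips (dirDeriv v f) := by
  refine ⟨contDiff_dirDeriv v hf.contDiff, fun k => ?_⟩
  refine .of_norm_le_sum (ι := Unit) (c := fun _ => ‖v‖)
    (fun _ => hf.boundedOnStrips_iteratedFDeriv (k + 1)) (fun _ => norm_nonneg v) fun p => ?_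
  simpa using norm_iteratedFDeriv_dirDeriv_le hf.contDiff v k p

end SmoothBoundedOnStrips

theorem smoothBoundedOnStrips_of_forall_basis {ι : Type*} [Finite ι] [FiniteDimensional ℝ E]
    [FiniteDimensional ℝ F] (b : Module.Basis ι ℝ (E × F))
    {P : (E × F → G) → Prop} (hsmooth : ∀ f, P f → ContDiff ℝ ∞ f)
    (hbdd : ∀ f, P f → BoundedOnStrips f) (hderiv : ∀ i f, P f → P (dirDeriv (b i) f))
    {f : E × F → G} (hf : P f) : SmoothBoundedOnStrips f := by
  refine ⟨hsmooth f hf, fun k => ?_⟩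
  have := Fintype.ofFinite ι
  induction k generalizing f with
  | zero => simpa only [BoundedOnStrips, norm_iteratedFDeriv_zero] using hbdd f hf
  | succ k ih =>
    exact .of_norm_le_sum (fun i => ih (hderiv i f hf))
      (fun _ => ContinuousLinearMap.opNorm_nonneg _)
      (norm_iteratedFDeriv_succ_le_sum_dirDeriv_basis b (hsmooth f hf) k)

end BoundedOnStrips

section MollifyFst

variable {𝕜 E F : Type*} [RCLike 𝕜] [NormedAddCommGroup E] [MeasurableSpace E]
  [NormedAddCommGroup F]

/-- Convolution in the first variable, `(x, y) ↦ ∫ φ(z) f(x - z, y) dμ(z)`. -/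
noncomputable def mollifyFst (φ : E → 𝕜) (μ : Measure E) (f : E × F → 𝕜) : E × F → 𝕜 :=
  fun p => ∫ z, φ z * f (p.1 - z, p.2) ∂μ

/-- The error `φ ∗ f - f` of mollification in the first variable. -/
noncomputable def mollifyFstError (φ : E → 𝕜) (μ : Measure E) (f : E × F → 𝕜) : E × F → 𝕜 :=
  fun p => mollifyFst φ μ f p - f p

variable [BorelSpace E] {φ : E → 𝕜} {μ : Measure E} {f : E × F → 𝕜}

theorem integrable_mul_comp_sub_fst (hφ : Integrable φ μ) (hf : Continuous f)
    (hb : BoundedOnStrips f) (p : E × F) : Integrable (fun z => φ z * f (p.1 - z, p.2)) μ := by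
  obtain ⟨C, hC⟩ := hb ‖p.2‖
  have hcont : Continuous fun z => f (p.1 - z, p.2) := by fun_prop
  exact hφ.mul_bdd (c := C) hcont.aestronglyMeasurable (.of_forall fun z => hC _ le_rfl)

theorem mollifyFstError_eq_integral_mul_sub (hφ : Integrable φ μ) (hφ_one : ∫ z, φ z ∂μ = 1)
    (hf : Continuous f) (hb : BoundedOnStrips f) (p : E × F) :
    mollifyFstError φ μ f p = ∫ z, φ z * (f (p.1 - z, p.2) - f p) ∂μ := by
  simp only [mul_sub]
  rw [integral_sub (integrable_mul_comp_sub_fst hφ hf hb p) (hφ.mul_const (f p)),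
    integral_mul_const, hφ_one, one_mul]
  rfl

variable [NormedSpace ℝ E] [NormedSpace ℝ F]

theorem integrable_smul_fderiv_comp_sub_fst [FiniteDimensional ℝ E] (hφ : Integrable φ μ)
    (hf : ContDiff ℝ 1 f) (hb : BoundedOnStrips (fderiv ℝ f)) (p : E × F) :
    Integrable (fun z => φ z • fderiv ℝ f (p.1 - z, p.2)) μ := by
  obtain ⟨C, hC⟩ := hb ‖p.2‖
  have hcont : Continuous fun z => fderiv ℝ f (p.1 - z, p.2) :=
    (hf.continuous_fderiv one_ne_zero).comp (by fun_prop)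
  exact hφ.smul_bdd C hcont.aestronglyMeasurable (.of_forall fun z => hC _ le_rfl)

theorem hasFDerivAt_mollifyFst [FiniteDimensional ℝ E] (hφ : Integrable φ μ)
    (hf : ContDiff ℝ 1 f) (hb : BoundedOnStrips f) (hb' : BoundedOnStrips (fderiv ℝ f))
    (p : E × F) :
    HasFDerivAt (mollifyFst φ μ f) (∫ z, φ z • fderiv ℝ f (p.1 - z, p.2) ∂μ) p := by
  obtain ⟨C, hC⟩ := hb' (‖p.2‖ + 1)
  have hsnd {q : E × F} (hq : q ∈ Metric.ball p 1) : ‖q.2‖ ≤ ‖p.2‖ + 1 := by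
    have : ‖q.2 - p.2‖ ≤ 1 := (norm_snd_le (q - p)).trans (mem_ball_iff_norm.1 hq).le
    linarith [norm_le_norm_add_norm_sub' q.2 p.2]
  have hint := integrable_mul_comp_sub_fst hφ hf.continuous hb
  refine hasFDerivAt_integral_of_dominated_of_fderiv_le (bound := fun z => ‖φ z‖ * C)
    (F' := fun q z => φ z • fderiv ℝ f (q.1 - z, q.2)) (Metric.ball_mem_nhds p one_pos)
    (.of_forall fun q => (hint q).aestronglyMeasurable) (hint p)
    (integrable_smul_fderiv_comp_sub_fst hφ hf hb' p).aestronglyMeasurable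
    (.of_forall fun z q hq => ?_) (hφ.norm.mul_const C) (.of_forall fun z q _ => ?_)
  · rw [norm_smul]
    exact mul_le_mul_of_nonneg_left (hC (q.1 - z, q.2) (hsnd (q := q) hq)) (norm_nonneg _)
  · have hdiff : Differentiable ℝ f := hf.differentiable one_ne_zero
    have h : DifferentiableAt ℝ (fun q : E × F => f (q.1 - z, q.2)) q := by fun_prop
    exact fderiv_comp_sub_fst f z q ▸ h.hasFDerivAt.const_smul (φ z)

namespace SmoothBoundedOnStrips

variable [FiniteDimensional ℝ E]

theorem hasFDerivAt_mollifyFst (hf : SmoothBoundedOnStrips f) (hφ : Integrable φ μ) (p : E × F) :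
    HasFDerivAt (mollifyFst φ μ f) (∫ z, φ z • fderiv ℝ f (p.1 - z, p.2) ∂μ) p :=
  _root_.hasFDerivAt_mollifyFst hφ (hf.contDiff.of_le (mod_cast le_top)) hf.boundedOnStrips
    hf.boundedOnStrips_fderiv p

theorem dirDeriv_mollifyFst (hf : SmoothBoundedOnStrips f) (hφ : Integrable φ μ) (v : E × F) :
    dirDeriv v (mollifyFst φ μ f) = mollifyFst φ μ (dirDeriv v f) := by
  funext p
  rw [dirDeriv, (hf.hasFDerivAt_mollifyFst hφ p).fderiv,
    ContinuousLinearMap.integral_apply (integrable_smul_fderiv_comp_sub_fst hφ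
      (hf.contDiff.of_le (mod_cast le_top)) hf.boundedOnStrips_fderiv p)]
  rfl

theorem contDiff_mollifyFst [FiniteDimensional ℝ F] (hf : SmoothBoundedOnStrips f)
    (hφ : Integrable φ μ) : ContDiff ℝ ∞ (mollifyFst φ μ f) := by
  refine contDiff_infty.2 fun k => ?_
  have hdiff {g : E × F → 𝕜} (hg : SmoothBoundedOnStrips g) :
      Differentiable ℝ (mollifyFst φ μ g) :=
    fun p => (hg.hasFDerivAt_mollifyFst hφ p).differentiableAt
  induction k generalizing f with
  | zero => exact contDiff_zero.2 (hdiff hf).continuous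
  | succ k ih =>
    push_cast
    refine contDiff_succ_iff_fderiv_apply.2 ⟨hdiff hf, by simp, fun v => ?_⟩
    change ContDiff ℝ k (dirDeriv v (mollifyFst φ μ f))
    rw [hf.dirDeriv_mollifyFst hφ]
    exact ih (hf.dirDeriv v)

theorem dirDeriv_mollifyFstError (hf : SmoothBoundedOnStrips f) (hφ : Integrable φ μ)
    (v : E × F) : dirDeriv v (mollifyFstError φ μ f) = mollifyFstError φ μ (dirDeriv v f) := by
  funext p
  have hsub : fderiv ℝ (mollifyFstError φ μ f) p =
      fderiv ℝ (mollifyFst φ μ f) p - fderiv ℝ f p :=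
    fderiv_fun_sub (hf.hasFDerivAt_mollifyFst hφ p).differentiableAt
      (hf.contDiff.differentiable (by simp) p)
  rw [mollifyFstError, ← hf.dirDeriv_mollifyFst hφ, dirDeriv, hsub]
  rfl

end SmoothBoundedOnStrips

theorem norm_mollifyFstError_le (hφ : Integrable φ μ) (hφ_one : ∫ z, φ z ∂μ = 1)
    (hφ_moment : Integrable (fun z => ‖z‖ * ‖φ z‖) μ) (hf : Differentiable ℝ f)
    (hb : BoundedOnStrips f) {y : F} {L : ℝ} (hL : ∀ x, ‖fderiv ℝ (fun x => f (x, y)) x‖ ≤ L)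
    (x : E) : ‖mollifyFstError φ μ f (x, y)‖ ≤ L * ∫ z, ‖z‖ * ‖φ z‖ ∂μ := by
  have hdiff : Differentiable ℝ fun x => f (x, y) := by fun_prop
  have hlip (z : E) : ‖f (x - z, y) - f (x, y)‖ ≤ L * ‖z‖ := by
    simpa using convex_univ.norm_image_sub_le_of_norm_fderiv_le (𝕜 := ℝ)
      (fun x _ => hdiff x) (fun x _ => hL x) (Set.mem_univ x) (Set.mem_univ (x - z))
  rw [mollifyFstError_eq_integral_mul_sub hφ hφ_one hf.continuous hb, ← integral_const_mul]
  refine norm_integral_le_of_norm_le (hφ_moment.const_mul L) (.of_forall fun z => ?_)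
  calc ‖φ z * (f (x - z, y) - f (x, y))‖ ≤ ‖φ z‖ * (L * ‖z‖) := by
        rw [norm_mul]
        exact mul_le_mul_of_nonneg_left (hlip z) (norm_nonneg _)
    _ = L * (‖z‖ * ‖φ z‖) := by ring

end MollifyFst

section EuclideanMoment

variable {ι G : Type*} [Fintype ι] [NormedAddCommGroup G]

theorem norm_le_sqrt_sum_sq (y : ι → ℝ) : ‖y‖ ≤ √(∑ i, y i ^ 2) := by
  refine (pi_norm_le_iff_of_nonneg (Real.sqrt_nonneg _)).2 fun i => Real.abs_le_sqrt ?_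
  exact Finset.single_le_sum (f := fun i => y i ^ 2) (fun i _ => sq_nonneg _) (Finset.mem_univ i)

theorem sqrt_sum_sq_le_mul_norm (y : ι → ℝ) : √(∑ i, y i ^ 2) ≤ √(Fintype.card ι) * ‖y‖ := by
  refine Real.sqrt_le_iff.2 ⟨by positivity, ?_⟩
  calc ∑ i, y i ^ 2 ≤ ∑ _i : ι, ‖y‖ ^ 2 := Finset.sum_le_sum fun i _ =>
        (sq_abs (y i)).symm.trans_le
          (pow_le_pow_left₀ (abs_nonneg _) (norm_le_pi_norm y i) 2)
    _ = (√(Fintype.card ι) * ‖y‖) ^ 2 := by simp [mul_pow]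

theorem integrable_sqrt_sum_sq_mul_norm_schwartzMap [NormedSpace ℝ G]
    (φ : SchwartzMap (ι → ℝ) G) : Integrable fun y => √(∑ i, y i ^ 2) * ‖φ y‖ := by
  have hsup : Integrable fun y => √(Fintype.card ι) * (‖y‖ * ‖φ y‖) := by
    simpa only [pow_one] using (φ.integrable_pow_mul volume 1).const_mul √(Fintype.card ι)
  refine hsup.mono' (by fun_prop) (.of_forall fun y => ?_)
  rw [Real.norm_of_nonneg (by positivity), ← mul_assoc]
  exact mul_le_mul_of_nonneg_right (sqrt_sum_sq_le_mul_norm y) (norm_nonneg _)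

theorem integrable_norm_mul_norm_of_sqrt_sum_sq_mul {μ : Measure (ι → ℝ)} {φ : (ι → ℝ) → G}
    (hφ : AEStronglyMeasurable φ μ)
    (hφ_moment : Integrable (fun y => √(∑ i, y i ^ 2) * ‖φ y‖) μ) :
    Integrable (fun y => ‖y‖ * ‖φ y‖) μ := by
  refine hφ_moment.mono' (continuous_norm.aestronglyMeasurable.mul hφ.norm)
    (.of_forall fun y => ?_)
  rw [Real.norm_of_nonneg (by positivity)]
  exact mul_le_mul_of_nonneg_right (norm_le_sqrt_sum_sq y) (norm_nonneg _)

end EuclideanMoment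

section PhaseSpace

/-- The phase space `ℝⁿ × ℝⁿ` of pairs `(x, ξ)`; its norm is the sup norm. -/
abbrev PhaseSpace (n : ℕ) : Type :=
  (Fin n → ℝ) × (Fin n → ℝ)

/-- The standard basis of phase space: `inl i` is the direction of `x i`, and `inr i` that
of `ξ i`. -/
noncomputable def phaseBasis (n : ℕ) : Module.Basis (Fin n ⊕ Fin n) ℝ (PhaseSpace n) :=
  (Pi.basisFun ℝ (Fin n)).prod (Pi.basisFun ℝ (Fin n))

/-- The derivative `∂^γ` on phase space. For `γ = Sum.elim β α` it is `∂_x^β ∂_ξ^α`, that is,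
`mixedD β α` for uncurried functions. -/
noncomputable def phaseDeriv {n : ℕ} (γ : Fin n ⊕ Fin n → ℕ) (f : PhaseSpace n → ℂ) :
    PhaseSpace n → ℂ :=
  multiIterate (fun k => dirDeriv (phaseBasis n k))
    ((List.finRange n).map Sum.inl ++ (List.finRange n).map Sum.inr) γ f

variable {n : ℕ} {f : PhaseSpace n → ℂ}

theorem phaseBasis_inl (i : Fin n) : phaseBasis n (.inl i) = (Pi.single i 1, 0) := by
  ext <;> simp [phaseBasis]

theorem phaseBasis_inr (i : Fin n) : phaseBasis n (.inr i) = (0, Pi.single i 1) := by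
  ext <;> simp [phaseBasis]

theorem md_slice_fst (hf : ContDiff ℝ ∞ f) (β : Fin n → ℕ) (ξ : Fin n → ℝ) :
    md β (fun x => f (x, ξ)) = fun x =>
      multiIterate (fun i => dirDeriv (phaseBasis n (.inl i))) (List.finRange n) β f (x, ξ) := by
  refine (map_multiIterate_of_semiconj (P := ContDiff ℝ ∞) (S := fun g x => g (x, ξ)) (B := pd)
    (fun i _ => contDiff_dirDeriv _) (fun i g hg => ?_) _ β hf).symm
  rw [phaseBasis_inl]
  exact (dirDeriv_slice_fst (hg.differentiable (by simp)) _ ξ).symm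

theorem md_slice_snd (hf : ContDiff ℝ ∞ f) (α : Fin n → ℕ) (x : Fin n → ℝ) :
    md α (fun ξ => f (x, ξ)) = fun ξ =>
      multiIterate (fun i => dirDeriv (phaseBasis n (.inr i))) (List.finRange n) α f (x, ξ) := by
  refine (map_multiIterate_of_semiconj (P := ContDiff ℝ ∞) (S := fun g ξ => g (x, ξ)) (B := pd)
    (fun i _ => contDiff_dirDeriv _) (fun i g hg => ?_) _ α hf).symm
  rw [phaseBasis_inr]
  exact (dirDeriv_slice_snd (hg.differentiable (by simp)) _ x).symm

theorem mixedD_zero_zero (σ : (Fin n → ℝ) → (Fin n → ℝ) → ℂ) : mixedD 0 0 σ = σ := by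
  have hmd (g : (Fin n → ℝ) → ℂ) : md 0 g = g := multiIterate_zero pd _ g
  funext x ξ
  simp only [mixedD, hmd]

theorem mixedD_eq_phaseDeriv (hf : ContDiff ℝ ∞ f) (β α : Fin n → ℕ) (x ξ : Fin n → ℝ) :
    mixedD β α (fun x ξ => f (x, ξ)) x ξ = phaseDeriv (Sum.elim β α) f (x, ξ) := by
  have hsmooth := multiIterate_induction (A := fun i => dirDeriv (phaseBasis n (.inr i)))
    (fun _ _ => contDiff_dirDeriv _) (List.finRange n) α hf
  simp only [mixedD, md_slice_snd hf, md_slice_fst hsmooth]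
  rw [phaseDeriv, multiIterate_append, multiIterate_map, multiIterate_map, Sum.elim_comp_inl,
    Sum.elim_comp_inr]

theorem phaseDeriv_dirDeriv_phaseBasis (hf : ContDiff ℝ ∞ f) (γ : Fin n ⊕ Fin n → ℕ)
    (k : Fin n ⊕ Fin n) :
    phaseDeriv γ (dirDeriv (phaseBasis n k) f) = phaseDeriv (γ + Pi.single k 1) f := by
  refine (multiIterate_add_single (A := fun k => dirDeriv (phaseBasis n k)) (P := ContDiff ℝ ∞)
    (fun _ _ => contDiff_dirDeriv _) (fun _ _ _ hg => dirDeriv_comm (contDiff_infty.1 hg 2) _ _)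
    ?_ ?_ γ hf).symm
  · simp [List.nodup_append, List.nodup_map_iff, Sum.inl_injective, Sum.inr_injective,
      List.nodup_finRange]
  · cases k <;> simp

theorem dirDeriv_phaseDeriv (hf : ContDiff ℝ ∞ f) (v : PhaseSpace n) (γ : Fin n ⊕ Fin n → ℕ) :
    dirDeriv v (phaseDeriv γ f) = phaseDeriv γ (dirDeriv v f) :=
  map_multiIterate_of_semiconj (A := fun k => dirDeriv (phaseBasis n k))
    (B := fun k => dirDeriv (phaseBasis n k)) (P := ContDiff ℝ ∞) (fun _ _ => contDiff_dirDeriv _)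
    (fun _ _ hg => dirDeriv_comm (contDiff_infty.1 hg 2) _ _) _ γ hf

theorem mixedD_dirDeriv_inl (hf : ContDiff ℝ ∞ f) (i : Fin n) (β α : Fin n → ℕ)
    (x ξ : Fin n → ℝ) :
    mixedD β α (fun x ξ => dirDeriv (phaseBasis n (.inl i)) f (x, ξ)) x ξ =
      mixedD (β + Pi.single i 1) α (fun x ξ => f (x, ξ)) x ξ := by
  have hγ : Sum.elim β α + Pi.single (.inl i) 1 = Sum.elim (β + Pi.single i 1) α := by
    rw [← Sum.elim_single_zero, ← Sum.elim_add_add, add_zero]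
  rw [mixedD_eq_phaseDeriv (contDiff_dirDeriv _ hf), phaseDeriv_dirDeriv_phaseBasis hf, hγ,
    mixedD_eq_phaseDeriv hf]

theorem mixedD_dirDeriv_inr (hf : ContDiff ℝ ∞ f) (i : Fin n) (β α : Fin n → ℕ)
    (x ξ : Fin n → ℝ) :
    mixedD β α (fun x ξ => dirDeriv (phaseBasis n (.inr i)) f (x, ξ)) x ξ =
      mixedD β (α + Pi.single i 1) (fun x ξ => f (x, ξ)) x ξ := by
  have hγ : Sum.elim β α + Pi.single (.inr i) 1 = Sum.elim β (α + Pi.single i 1) := by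
    rw [← Sum.elim_zero_single, ← Sum.elim_add_add, add_zero]
  rw [mixedD_eq_phaseDeriv (contDiff_dirDeriv _ hf), phaseDeriv_dirDeriv_phaseBasis hf, hγ,
    mixedD_eq_phaseDeriv hf]

theorem norm_fderiv_slice_phaseDeriv_le (hf : ContDiff ℝ ∞ f) (β α : Fin n → ℕ)
    (x ξ : Fin n → ℝ) :
    ‖fderiv ℝ (fun x => phaseDeriv (Sum.elim β α) f (x, ξ)) x‖ ≤
      ∑ i, ‖mixedD (β + Pi.single i 1) α (fun x ξ => f (x, ξ)) x ξ‖ := by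
  refine (norm_le_sum_norm_apply_single _).trans_eq <| Finset.sum_congr rfl fun i _ => ?_
  have hsmooth : ContDiff ℝ ∞ (phaseDeriv (Sum.elim β α) f) :=
    multiIterate_induction (fun _ _ => contDiff_dirDeriv _) _ _ hf
  have hslice := congrFun
    (dirDeriv_slice_fst (hsmooth.differentiable (by simp)) (Pi.single i 1) ξ) x
  rw [← phaseBasis_inl, dirDeriv_phaseDeriv hf, ← mixedD_eq_phaseDeriv (contDiff_dirDeriv _ hf),
    mixedD_dirDeriv_inl hf] at hslice
  exact congrArg norm hslice

theorem phaseDeriv_mollifyFstError {φ : (Fin n → ℝ) → ℂ} {μ : Measure (Fin n → ℝ)}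
    (hf : SmoothBoundedOnStrips f) (hφ : Integrable φ μ) (γ : Fin n ⊕ Fin n → ℕ) :
    phaseDeriv γ (mollifyFstError φ μ f) = mollifyFstError φ μ (phaseDeriv γ f) :=
  (map_multiIterate_of_semiconj (fun _ _ hg => hg.dirDeriv _)
    (fun _ _ hg => (hg.dirDeriv_mollifyFstError hφ _).symm) _ γ hf).symm

end PhaseSpace

section Symbols

variable {n : ℕ} {m ρ δ : ℝ} {σ : (Fin n → ℝ) → (Fin n → ℝ) → ℂ} {f : PhaseSpace n → ℂ}

theorem wt_pos (ξ : Fin n → ℝ) : 0 < wt ξ := by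
  unfold wt
  positivity

theorem continuous_wt_rpow (s : ℝ) : Continuous fun ξ : Fin n → ℝ => wt ξ ^ s := by
  refine Continuous.rpow_const ?_ fun ξ => .inl (wt_pos ξ).ne'
  unfold wt
  fun_prop

theorem mOrd_add_single (β : Fin n → ℕ) (i : Fin n) : mOrd (β + Pi.single i 1) = mOrd β + 1 := by
  simp [mOrd, Finset.sum_add_distrib, Pi.single_apply]

theorem wt_rpow_neg_mul_le_iff {s a K : ℝ} {ξ : Fin n → ℝ} :
    wt ξ ^ (-s / 2) * a ≤ K ↔ a ≤ K * wt ξ ^ (s / 2) := by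
  rw [neg_div, Real.rpow_neg (wt_pos ξ).le, ← div_eq_inv_mul,
    div_le_iff₀ (Real.rpow_pos_of_pos (wt_pos ξ) _)]

namespace SymbolClass

theorem dirDeriv_inl (hf : SymbolClass m ρ δ fun x ξ => f (x, ξ)) (i : Fin n) :
    SymbolClass (m + δ) ρ δ fun x ξ => dirDeriv (phaseBasis n (.inl i)) f (x, ξ) := by
  refine ⟨contDiff_dirDeriv _ hf.1, fun α β => ?_⟩
  obtain ⟨C, hC, hbound⟩ := hf.2 α (β + Pi.single i 1)
  refine ⟨C, hC, fun x ξ => ?_⟩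
  rw [mixedD_dirDeriv_inl hf.1]
  convert hbound x ξ using 4
  rw [mOrd_add_single]
  ring

theorem dirDeriv_inr (hf : SymbolClass m ρ δ fun x ξ => f (x, ξ)) (i : Fin n) :
    SymbolClass (m - ρ) ρ δ fun x ξ => dirDeriv (phaseBasis n (.inr i)) f (x, ξ) := by
  refine ⟨contDiff_dirDeriv _ hf.1, fun α β => ?_⟩
  obtain ⟨C, hC, hbound⟩ := hf.2 (α + Pi.single i 1) β
  refine ⟨C, hC, fun x ξ => ?_⟩
  rw [mixedD_dirDeriv_inr hf.1]
  convert hbound x ξ using 4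
  rw [mOrd_add_single]
  ring

theorem boundedOnStrips (hf : SymbolClass m ρ δ fun x ξ => f (x, ξ)) : BoundedOnStrips f := by
  intro R
  obtain ⟨C, hC, hbound⟩ := hf.2 0 0
  obtain ⟨B, hB⟩ := (isCompact_closedBall (0 : Fin n → ℝ) R).bddAbove_image
    (continuous_wt_rpow _).continuousOn
  refine ⟨C * B, fun p hp => ?_⟩
  have hwt := hB (Set.mem_image_of_mem _ (mem_closedBall_zero_iff.2 hp))
  rw [mixedD_zero_zero] at hbound
  exact (hbound p.1 p.2).trans (mul_le_mul_of_nonneg_left hwt hC.le)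

theorem smoothBoundedOnStrips (hσ : SymbolClass m ρ δ σ) :
    SmoothBoundedOnStrips fun p : PhaseSpace n => σ p.1 p.2 := by
  refine smoothBoundedOnStrips_of_forall_basis (phaseBasis n)
    (P := fun f => ∃ m, SymbolClass m ρ δ fun x ξ => f (x, ξ)) (fun f ⟨_, hf⟩ => hf.1)
    (fun f ⟨_, hf⟩ => hf.boundedOnStrips) ?_ ⟨m, hσ⟩
  rintro (i | i) f ⟨m, hf⟩
  · exact ⟨m + δ, hf.dirDeriv_inl i⟩
  · exact ⟨m - ρ, hf.dirDeriv_inr i⟩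

theorem norm_mixedD_le_hSem_mul (hσ : SymbolClass m ρ δ σ) (α β : Fin n → ℕ) (x ξ : Fin n → ℝ) :
    ‖mixedD β α σ x ξ‖ ≤ hSem m ρ δ α β σ * wt ξ ^ ((m - ρ * mOrd α + δ * mOrd β) / 2) := by
  obtain ⟨C, -, hbound⟩ := hσ.2 α β
  refine wt_rpow_neg_mul_le_iff.1 <| le_ciSup (ι := PhaseSpace n) (f := fun p =>
    wt p.2 ^ (-(m - ρ * mOrd α + δ * mOrd β) / 2) * ‖mixedD β α σ p.1 p.2‖) ⟨C, ?_⟩ (x, ξ)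
  rintro _ ⟨p, rfl⟩
  exact wt_rpow_neg_mul_le_iff.2 (hbound p.1 p.2)

theorem norm_mixedD_add_single_le (hσ : SymbolClass m ρ δ σ) {α β : Fin n → ℕ} {i : Fin n} {M : ℝ}
    (hM : hSem m ρ δ α (β + Pi.single i 1) σ ≤ M) (x ξ : Fin n → ℝ) :
    ‖mixedD (β + Pi.single i 1) α σ x ξ‖ ≤
      M * wt ξ ^ ((m + δ - ρ * mOrd α + δ * mOrd β) / 2) := by
  have hexp : m - ρ * mOrd α + δ * mOrd (β + Pi.single i 1) =
      m + δ - ρ * mOrd α + δ * mOrd β := by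
    rw [mOrd_add_single]
    ring
  have hbound := hσ.norm_mixedD_le_hSem_mul α (β + Pi.single i 1) x ξ
  rw [hexp] at hbound
  exact hbound.trans (mul_le_mul_of_nonneg_right hM (Real.rpow_nonneg (wt_pos ξ).le _))

end SymbolClass

section Mollification

variable {φ : (Fin n → ℝ) → ℂ}

theorem mixedD_mollify_sub (hσ : SymbolClass m ρ δ σ) (hφ : Integrable φ) (β α : Fin n → ℕ)
    (x ξ : Fin n → ℝ) :
    mixedD β α (fun x ξ => (∫ z, φ z * σ (x - z) ξ) - σ x ξ) x ξ =
      mollifyFstError φ volume (phaseDeriv (Sum.elim β α) fun p => σ p.1 p.2) (x, ξ) := by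
  have hf := hσ.smoothBoundedOnStrips
  rw [← phaseDeriv_mollifyFstError hf hφ]
  exact mixedD_eq_phaseDeriv ((hf.contDiff_mollifyFst hφ).sub hf.contDiff) β α x ξ

theorem norm_mixedD_mollify_sub_le (hσ : SymbolClass m ρ δ σ) (hφ : Integrable φ)
    (hφ_moment : Integrable fun y => √(∑ i, y i ^ 2) * ‖φ y‖) (hφ_one : ∫ y, φ y = 1)
    {α β : Fin n → ℕ} {M : ℝ} (hM : ∀ i, hSem m ρ δ α (β + Pi.single i 1) σ ≤ M)
    (x ξ : Fin n → ℝ) :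
    ‖mixedD β α (fun x ξ => (∫ z, φ z * σ (x - z) ξ) - σ x ξ) x ξ‖ ≤
      n * (∫ y, √(∑ i, y i ^ 2) * ‖φ y‖) * M *
        wt ξ ^ ((m + δ - ρ * mOrd α + δ * mOrd β) / 2) := by
  set w := wt ξ ^ ((m + δ - ρ * mOrd α + δ * mOrd β) / 2)
  set h := phaseDeriv (Sum.elim β α) fun p : PhaseSpace n => σ p.1 p.2
  have hh : SmoothBoundedOnStrips h :=
    multiIterate_induction (fun _ _ hg => hg.dirDeriv _) _ _ hσ.smoothBoundedOnStrips
  have hgrad (x : Fin n → ℝ) : ‖fderiv ℝ (fun x => h (x, ξ)) x‖ ≤ n * (M * w) := by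
    refine (norm_fderiv_slice_phaseDeriv_le hσ.1 β α x ξ).trans ?_
    simpa using Finset.sum_le_sum fun i (_ : i ∈ Finset.univ) =>
      hσ.norm_mixedD_add_single_le (hM i) x ξ
  have hsup := integrable_norm_mul_norm_of_sqrt_sum_sq_mul hφ.1 hφ_moment
  rw [mixedD_mollify_sub hσ hφ]
  calc ‖mollifyFstError φ volume h (x, ξ)‖
      ≤ n * (M * w) * ∫ y, ‖y‖ * ‖φ y‖ :=
        norm_mollifyFstError_le hφ hφ_one hsup (hh.contDiff.differentiable (by simp))
          hh.boundedOnStrips hgrad x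
    _ ≤ n * (M * w) * ∫ y, √(∑ i, y i ^ 2) * ‖φ y‖ := by
        refine mul_le_mul_of_nonneg_left ?_ ((norm_nonneg _).trans (hgrad x))
        exact integral_mono hsup hφ_moment fun y =>
          mul_le_mul_of_nonneg_right (norm_le_sqrt_sum_sq y) (norm_nonneg _)
    _ = n * (∫ y, √(∑ i, y i ^ 2) * ‖φ y‖) * M * w := by ring

theorem SymbolClass.mollify_sub (hσ : SymbolClass m ρ δ σ) (hφ : Integrable φ)
    (hφ_moment : Integrable fun y => √(∑ i, y i ^ 2) * ‖φ y‖) (hφ_one : ∫ y, φ y = 1) :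
    SymbolClass (m + δ) ρ δ fun x ξ => (∫ z, φ z * σ (x - z) ξ) - σ x ξ := by
  have hf := hσ.smoothBoundedOnStrips
  refine ⟨(hf.contDiff_mollifyFst hφ).sub hf.contDiff, fun α β => ?_⟩
  obtain ⟨M, hM⟩ := (Set.finite_range fun i => hSem m ρ δ α (β + Pi.single i 1) σ).bddAbove
  refine ⟨|n * (∫ y, √(∑ i, y i ^ 2) * ‖φ y‖) * M| + 1, by positivity, fun x ξ => ?_⟩
  refine (norm_mixedD_mollify_sub_le hσ hφ hφ_moment hφ_one
    (fun i => hM (Set.mem_range_self i)) x ξ).trans ?_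
  exact mul_le_mul_of_nonneg_right ((le_abs_self _).trans (le_add_of_nonneg_right zero_le_one))
    (Real.rpow_nonneg (wt_pos ξ).le _)

end Mollification

end Symbols

theorem symbol_mollification_estimate_general {n : ℕ} {m ρ δ : ℝ}
    {σ : (Fin n → ℝ) → (Fin n → ℝ) → ℂ} {φ : (Fin n → ℝ) → ℂ} (hσ : SymbolClass m ρ δ σ)
    (hφ : Integrable φ) (hφ_moment : Integrable fun y => √(∑ i, y i ^ 2) * ‖φ y‖)
    (hφ_one : ∫ y, φ y = 1) :
    SymbolClass (m + δ) ρ δ (fun x ξ => (∫ z, φ z * σ (x - z) ξ) - σ x ξ) ∧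
      ∀ (α β : Fin n → ℕ) (M : ℝ),
        (∀ β' : Fin n → ℕ, ∑ i, β' i = ∑ i, β i + 1 → hSem m ρ δ α β' σ ≤ M) →
        ∀ x ξ, wt ξ ^ (-(m + δ - ρ * mOrd α + δ * mOrd β) / 2) *
            ‖mixedD β α (fun x' ξ' => (∫ z, φ z * σ (x' - z) ξ') - σ x' ξ') x ξ‖ ≤
          n * (∫ y, √(∑ i, y i ^ 2) * ‖φ y‖) * M := by
  refine ⟨hσ.mollify_sub hφ hφ_moment hφ_one, fun α β M hM x ξ => ?_⟩
  have hM' (i : Fin n) : hSem m ρ δ α (β + Pi.single i 1) σ ≤ M :=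
    hM _ (by simp [Finset.sum_add_distrib, Pi.single_apply])
  exact wt_rpow_neg_mul_le_iff.2 (norm_mixedD_mollify_sub_le hσ hφ hφ_moment hφ_one hM' x ξ)

/-- Taylor-type estimate for `σ∗φ − σ` when `∫ φ = 1`, with a
constant depending only on `n` and `β`; in particular `σ∗φ − σ ∈ S^{m+δ}_{ρ,δ}`. -/
theorem symbol_mollification_estimate (n : ℕ) (hn : 1 ≤ n) (β : Fin n → ℕ) :
    ∃ C > 0, ∀ (m ρ δ : ℝ), ρ ≤ 1 → δ ≤ ρ → 0 ≤ δ →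
      ∀ (α : Fin n → ℕ) (σ : (Fin n → ℝ) → (Fin n → ℝ) → ℂ)
        (φ : SchwartzMap (Fin n → ℝ) ℂ),
      SymbolClass m ρ δ σ → (∫ y, φ y) = 1 →
      SymbolClass (m + δ) ρ δ (fun x ξ => (∫ z, φ z * σ (x - z) ξ) - σ x ξ) ∧
      ∀ M : ℝ, (∀ β' : Fin n → ℕ, (∑ i, β' i) = (∑ i, β i) + 1 →
          hSem m ρ δ α β' σ ≤ M) →
        ∀ x ξ, wt ξ ^ (-(m + δ - ρ * mOrd α + δ * mOrd β) / 2)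
            * ‖mixedD β α (fun x' ξ' => (∫ z, φ z * σ (x' - z) ξ') - σ x' ξ') x ξ‖
          ≤ C * (∫ y, Real.sqrt (∑ i, y i ^ 2) * ‖φ y‖) * M := by
  refine ⟨n, by exact_mod_cast hn, fun m ρ δ _ _ _ α σ φ hσ hφ_one => ?_⟩
  have h := symbol_mollification_estimate_general hσ φ.integrable
    (integrable_sqrt_sum_sq_mul_norm_schwartzMap φ) hφ_one
  exact ⟨h.1, h.2 α β⟩
end
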